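/- arXiv:1011.3146 — 3 statements merged into one kernel-verified Lean document; each statement's English description precedes it below -/
import Mathlib

section
/- Let X be a proper metric space and let Γ be a group acting geometrically on X. Let ζ_1, …, ζ_k ∈ Γ be free generators of a free abelian subgroup Λ of Γ, and let C = ⋂_{i≤k} C_Γ(ζ_i) be the common centralizer of the ζ_i. Then for every R > 0 the group C acts cocompactly on the set M_R = {x ∈ X | Σ_{i≤k} d(ζ_i•x, x) ≤ R}: there exists a compact set K ⊆ X such that every x ∈ M_R can be written as x = γ•y with γ ∈ C and y ∈ K ∩ M_R. (Paper: Lemma 1.) -/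
/-! Choose a compact `K` whose translates cover `X`. If `g • x ∈ K`, then each conjugate
`g * ζ i * g⁻¹` moves `g • x` as little as `ζ i` moves `x`. When `x ∈ M_R`, proper discontinuity
leaves finitely many possibilities for these conjugates, hence for the conjugated tuple. Two
elements conjugating `ζ` to the same tuple differ by an element of `C`, so finitely many
translates of `K` suffice to represent `M_R` modulo `C`. -/

open Set Metric
open scoped Pointwise

theorem mem_centralizer_range_iff {G ι : Type*} [Group G] {ζ : ι → G} {g : G} :
    g ∈ Subgroup.centralizer (range ζ) ↔ ∀ i, Commute g (ζ i) := by
  simp only [Subgroup.mem_centralizer_iff, forall_mem_range, commute_iff_eq, eq_comm]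

theorem exists_finite_forall_inv_mul_mem_centralizer {G ι : Type*} [Group G] [Finite ι]
    (ζ : ι → G) {F : ι → Set G} (hF : ∀ i, (F i).Finite) :
    ∃ S : Set G, S.Finite ∧ ∀ g, (∀ i, g * ζ i * g⁻¹ ∈ F i) →
      ∃ s ∈ S, s⁻¹ * g ∈ Subgroup.centralizer (range ζ) := by
  let conj : G → ι → G := fun g i => g * ζ i * g⁻¹
  have finite_conj : (conj '' {g | ∀ i, conj g i ∈ F i}).Finite :=
    (Finite.pi' hF).subset (image_subset_iff.2 fun _ hg => hg)
  obtain ⟨S, -, hS, hS_image⟩ := finite_conj.exists_subset_finite_image_eq subset_rfl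
  refine ⟨S, hS, fun g hg => ?_⟩
  obtain ⟨s, hs, hsg⟩ : conj g ∈ conj '' S := hS_image ▸ mem_image_of_mem conj hg
  refine ⟨s, hs, mem_centralizer_range_iff.2 fun i => ?_⟩
  have hs_semiconj : SemiconjBy s (ζ i) (conj g i) := hsg ▸ SemiconjBy.conj_mk s (ζ i)
  exact hs_semiconj.inv_symm_left.mul_left (SemiconjBy.conj_mk g (ζ i))

/-- The subgroup `H` acts cocompactly on `S`: every point of `S` is an `H`-translate of a point of
`K ∩ S`, for some `K` compact in `X`. As in the paper, `K ∩ S` itself need not be compact;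
unlike there, the definition does not require `S` to be `H`-invariant. -/
def IsCocompactOn {Γ X : Type*} [Group Γ] [MulAction Γ X] [TopologicalSpace X]
    (H : Subgroup Γ) (S : Set X) : Prop :=
  ∃ K : Set X, IsCompact K ∧ ∀ x ∈ S, ∃ γ ∈ H, ∃ y ∈ K ∩ S, x = γ • y

theorem properlyDiscontinuousSMul_of_finite_image_inter_self
    {Γ X : Type*} [SMul Γ X] [TopologicalSpace X]
    (h : ∀ K : Set X, IsCompact K → {γ : Γ | ((fun x => γ • x) '' K ∩ K).Nonempty}.Finite) :
    ProperlyDiscontinuousSMul Γ X where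
  finite_disjoint_inter_image {K L} hK hL :=
    (h (K ∪ L) (hK.union hL)).subset fun _ hγ =>
      hγ.mono (inter_subset_inter (image_mono subset_union_left) subset_union_right)

section Displacement

variable {Γ X : Type*} [PseudoMetricSpace X]

/-- The displacement function `δ_γ` of the paper, which measures how far `γ` moves each point. -/
def displacement [SMul Γ X] (γ : Γ) (x : X) : ℝ := dist (γ • x) x

theorem displacement_nonneg [SMul Γ X] (γ : Γ) (x : X) : 0 ≤ displacement γ x := dist_nonneg

theorem displacement_smul_of_semiconjBy [Monoid Γ] [MulAction Γ X] [IsIsometricSMul Γ X]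
    {g a b : Γ} (h : SemiconjBy g a b) (x : X) :
    displacement b (g • x) = displacement a x := by
  rw [displacement, smul_smul, ← h.eq, mul_smul, dist_smul, displacement]

theorem finite_setOf_displacement_le [SMul Γ X] [ProperSpace X]
    [ProperlyDiscontinuousSMul Γ X] {K : Set X} (hK : IsCompact K) (r : ℝ) :
    {γ : Γ | ∃ x ∈ K, displacement γ x ≤ r}.Finite :=
  (ProperlyDiscontinuousSMul.finite_disjoint_inter_image hK (hK.cthickening (r := r))).subset
    fun γ ⟨x, hx, hγx⟩ => ⟨γ • x, mem_image_of_mem _ hx, mem_cthickening_of_dist_le _ x r K hx hγx⟩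

variable [Group Γ] [MulAction Γ X] [ProperSpace X] [IsIsometricSMul Γ X]
  [ProperlyDiscontinuousSMul Γ X]

theorem isCocompactOn_centralizer_of_displacement_le {ι : Type*} [Finite ι]
    (ζ : ι → Γ) {K : Set X} (hK : IsCompact K) (hcover : ∀ x, ∃ γ : Γ, γ • x ∈ K)
    {M : Set X} (hM : ∀ c ∈ Subgroup.centralizer (range ζ), ∀ x ∈ M, c • x ∈ M)
    {r : ι → ℝ} (hr : ∀ x ∈ M, ∀ i, displacement (ζ i) x ≤ r i) :
    IsCocompactOn (Subgroup.centralizer (range ζ)) M := by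
  obtain ⟨S, hS, hrep⟩ := exists_finite_forall_inv_mul_mem_centralizer ζ
    fun i => finite_setOf_displacement_le (Γ := Γ) hK (r i)
  refine ⟨⋃ s ∈ S, s⁻¹ • K, hS.isCompact_biUnion fun s _ => hK.smul s⁻¹, fun x hx => ?_⟩
  obtain ⟨g, hgx⟩ := hcover x
  obtain ⟨s, hs, hc⟩ := hrep g fun i =>
    ⟨g • x, hgx, (displacement_smul_of_semiconjBy (.conj_mk g (ζ i)) x).trans_le (hr x hx i)⟩
  have hmem : (s⁻¹ * g) • x ∈ ⋃ s ∈ S, s⁻¹ • K :=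
    mem_biUnion hs (mul_smul s⁻¹ g x ▸ smul_mem_smul_set hgx)
  exact ⟨(s⁻¹ * g)⁻¹, inv_mem hc, (s⁻¹ * g) • x, ⟨hmem, hM _ hc x hx⟩, (inv_smul_smul _ _).symm⟩

theorem isCocompactOn_centralizer_setOf_sum_displacement_le {ι : Type*} [Fintype ι]
    (ζ : ι → Γ) {K : Set X} (hK : IsCompact K) (hcover : ∀ x, ∃ γ : Γ, γ • x ∈ K)
    (R : ℝ) :
    IsCocompactOn (Subgroup.centralizer (range ζ)) {x : X | ∑ i, displacement (ζ i) x ≤ R} := by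
  refine isCocompactOn_centralizer_of_displacement_le ζ hK hcover (r := fun _ => R)
    (fun c hc x hx => ?_) fun x hx i => ?_
  · have hdisp (i : ι) : displacement (ζ i) (c • x) = displacement (ζ i) x :=
      displacement_smul_of_semiconjBy (mem_centralizer_range_iff.1 hc i) x
    exact (Finset.sum_congr rfl fun i _ => hdisp i).trans_le hx
  · exact (Finset.single_le_sum (fun j _ => displacement_nonneg (ζ j) x)
      (Finset.mem_univ i)).trans hx

end Displacement

theorem lemma1_centralizer_acts_cocompactly_on_MR_general
    {X : Type*} [PseudoMetricSpace X] [ProperSpace X]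
    {Γ : Type*} [Group Γ] [MulAction Γ X]
    (isom : ∀ (γ : Γ) (x y : X), dist (γ • x) (γ • y) = dist x y)
    (propdisc : ∀ K : Set X, IsCompact K →
      {γ : Γ | ((fun x => γ • x) '' K ∩ K).Nonempty}.Finite)
    (cocpt : ∃ K : Set X, IsCompact K ∧ ∀ x : X, ∃ γ : Γ, γ • x ∈ K)
    {ι : Type*} [Fintype ι] (ζ : ι → Γ) (R : ℝ) :
    ∃ K : Set X, IsCompact K ∧
      ∀ x ∈ {x : X | ∑ i, dist (ζ i • x) x ≤ R},
        ∃ γ : Γ, (∀ i, Commute γ (ζ i)) ∧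
          ∃ y ∈ K ∩ {x : X | ∑ i, dist (ζ i • x) x ≤ R}, x = γ • y := by
  have : IsIsometricSMul Γ X := ⟨fun γ => .of_dist_eq (isom γ)⟩
  have := properlyDiscontinuousSMul_of_finite_image_inter_self propdisc
  obtain ⟨K₀, hK₀, hcover⟩ := cocpt
  obtain ⟨K, hK, hKM⟩ := isCocompactOn_centralizer_setOf_sum_displacement_le ζ hK₀ hcover R
  refine ⟨K, hK, fun x hx => ?_⟩
  obtain ⟨γ, hγ, hy⟩ := hKM x hx
  exact ⟨γ, mem_centralizer_range_iff.1 hγ, hy⟩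

/-- **Lemma 1.** Let `X` be a proper metric space with a geometric action of `Γ`
(by isometries, properly discontinuously, cocompactly). Let `ζ 1, …, ζ k` be free
generators of a free abelian subgroup of `Γ` and `C` their common centralizer.
For every `R > 0`, `C` acts cocompactly on `M_R = {x | ∑ i, dist (ζ i • x) x ≤ R}`. -/
theorem lemma1_centralizer_acts_cocompactly_on_MR
    {X : Type*} [MetricSpace X] [ProperSpace X]
    {Γ : Type*} [Group Γ] [MulAction Γ X]
    -- Γ acts by isometries
    (isom : ∀ (γ : Γ) (x y : X), dist (γ • x) (γ • y) = dist x y)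
    -- Γ acts properly discontinuously
    (propdisc : ∀ K : Set X, IsCompact K →
      {γ : Γ | ((fun x => γ • x) '' K ∩ K).Nonempty}.Finite)
    -- Γ acts cocompactly
    (cocpt : ∃ K : Set X, IsCompact K ∧ ∀ x : X, ∃ γ : Γ, γ • x ∈ K)
    -- ζ 1, …, ζ k are free generators of a free abelian subgroup of Γ
    {k : ℕ} (ζ : Fin k → Γ)
    (φ : Multiplicative (Fin k → ℤ) →* Γ)
    (hφinj : Function.Injective φ)
    (hφζ : ∀ i : Fin k, φ (Multiplicative.ofAdd (Pi.single i 1)) = ζ i)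
    (R : ℝ) (hR : 0 < R) :
    ∃ K : Set X, IsCompact K ∧
      ∀ x ∈ {x : X | ∑ i : Fin k, dist (ζ i • x) x ≤ R},
        ∃ γ : Γ, (∀ i : Fin k, Commute γ (ζ i)) ∧
          ∃ y ∈ K ∩ {x : X | ∑ i : Fin k, dist (ζ i • x) x ≤ R}, x = γ • y := by
  exact lemma1_centralizer_acts_cocompactly_on_MR_general isom propdisc cocpt ζ R
end

section
/- Let Y and Y' be metric spaces and equip X = Y × ℝ and X' = Y' × ℝ with the ℓ²-product metric d((y,s),(z,t)) = √(d(y,z)² + (s−t)²). Let L ≥ 1, A ≥ 0 and let Φ : X → X' be an (L,A)-quasi-isometry. Suppose there are real numbers a, b > 0 such that for all y ∈ Y, t ∈ ℝ and n ∈ ℤ the map Φ satisfies Φ(y, t + n·a) = ((Φ(y,t)).1, (Φ(y,t)).2 + n·b). Then the map Φ̌ : Y → Y', y ↦ (Φ(y,0)).1 is a quasi-isometry: there exists A' ≥ 0 such that Φ̌ is an (L, A')-quasi-isometric embedding whose image is A'-dense in Y'. (Paper: Lemma 11, first assertion, in the model case Min_X(Λ) ≅ X̌ × ℝ with Λ acting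 by vertical translations.) -/
/-!
The projection `Φ̌` is the restriction of `Φ` to the slice at height `0`, followed by the projection
to `Y'`. The slice is embedded isometrically and the projection is `1`-Lipschitz, which gives the
upper bound on distances in `Y'`. Conversely, equivariance makes `Φ` map the fibre over `y` coarsely
onto the fibre over `Φ̌ y`. Hence points of the fibres over `y` and `z` can be chosen whose images
lie at almost the same height, so that the distance of their images is almost that of `Φ̌ y` and
`Φ̌ z`; and a point whose image is close to the fibre over `y'` can be moved within its own fibre to
height `0` without moving the first coordinate of its image far.
-/

open WithLp
open scoped ENNReal

section QuasiIsometry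

variable {X X' : Type*} [PseudoMetricSpace X] [PseudoMetricSpace X'] {L A B : ℝ} {f : X → X'}

/-- An `(L, A)`-quasi-isometric embedding: distances are distorted by at most a factor `L` up to the
additive error `A`. No sign conditions on the constants are built in. -/
structure IsQuasiIsometricEmbedding (L A : ℝ) (f : X → X') : Prop where
  dist_map_le : ∀ x y, (1 / L) * dist (f x) (f y) - A ≤ dist x y
  dist_le : ∀ x y, dist x y ≤ L * dist (f x) (f y) + A

/-- An `(L, A)`-quasi-isometry: a quasi-isometric embedding with `A`-dense image, where the same
constant `A` serves as additive error and as density. -/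
structure IsQuasiIsometry (L A : ℝ) (f : X → X') : Prop
    extends IsQuasiIsometricEmbedding L A f where
  exists_dist_map_le : ∀ x', ∃ x, dist (f x) x' ≤ A

theorem IsQuasiIsometricEmbedding.mono (hf : IsQuasiIsometricEmbedding L A f) (hAB : A ≤ B) :
    IsQuasiIsometricEmbedding L B f where
  dist_map_le x y := (sub_le_sub_left hAB _).trans (hf.dist_map_le x y)
  dist_le x y := (hf.dist_le x y).trans (add_le_add_right hAB _)

theorem IsQuasiIsometricEmbedding.dist_map_le_mul (hf : IsQuasiIsometricEmbedding L A f)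
    (hL : 0 < L) (x y : X) : dist (f x) (f y) ≤ L * (dist x y + A) := by
  rw [← inv_mul_le_iff₀ hL, ← one_div, ← sub_le_iff_le_add]
  exact hf.dist_map_le x y

end QuasiIsometry

section ProductDistance

variable {p : ℝ≥0∞} [Fact (1 ≤ p)] {Y Z : Type*} [PseudoMetricSpace Y] [PseudoMetricSpace Z]

theorem dist_toLp_prod_swap (u v : Y × Z) :
    dist (toLp p u.swap) (toLp p v.swap) = dist (toLp p u) (toLp p v) := by
  rcases eq_or_ne p ∞ with rfl | hp
  · simp only [prod_dist_eq_sup, toLp_fst, toLp_snd, Prod.fst_swap, Prod.snd_swap, sup_comm]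
  · have hp_pos : 0 < p.toReal := ENNReal.toReal_pos (zero_lt_one.trans_le Fact.out).ne' hp
    simp only [prod_dist_eq_add hp_pos, toLp_fst, toLp_snd, Prod.fst_swap, Prod.snd_swap, add_comm]

theorem dist_toLp_prod_same_right (x y : Y) (z : Z) :
    dist (toLp p (x, z)) (toLp p (y, z)) = dist x y := by
  rcases eq_or_ne p ∞ with rfl | hp
  · simp [prod_dist_eq_sup]
  · have hp_pos : 0 < p.toReal := ENNReal.toReal_pos (zero_lt_one.trans_le Fact.out).ne' hp
    simp [prod_dist_eq_add hp_pos, Real.zero_rpow hp_pos.ne',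
      Real.rpow_rpow_inv dist_nonneg hp_pos.ne']

theorem dist_toLp_prod_same_left (y : Y) (z w : Z) :
    dist (toLp p (y, z)) (toLp p (y, w)) = dist z w :=
  (dist_toLp_prod_swap (z, y) (w, y)).trans (dist_toLp_prod_same_right z w y)

theorem dist_toLp_two_prod (u v : Y × ℝ) :
    dist (toLp 2 u) (toLp 2 v) = √(dist u.1 v.1 ^ 2 + (u.2 - v.2) ^ 2) := by
  simp [prod_dist_eq_add, Real.sqrt_eq_rpow, Real.dist_eq]

end ProductDistance

theorem exists_int_abs_sub_mul_le {𝕜 : Type*} [Field 𝕜] [LinearOrder 𝕜] [IsStrictOrderedRing 𝕜]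
    [FloorRing 𝕜] {c : 𝕜} (hc : c ≠ 0) (x : 𝕜) : ∃ n : ℤ, |x - n * c| ≤ |c| / 2 := by
  refine ⟨round (x / c), ?_⟩
  calc |x - round (x / c) * c|
    _ = |x / c - round (x / c)| * |c| := by rw [← abs_mul, sub_mul, div_mul_cancel₀ x hc]
    _ ≤ 1 / 2 * |c| := by gcongr; exact abs_sub_round _
    _ = |c| / 2 := by ring

section Projection

variable {p : ℝ≥0∞} [Fact (1 ≤ p)] {Y Y' Z Z' : Type*} [PseudoMetricSpace Y']
  [PseudoMetricSpace Z'] {L A C : ℝ}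

theorem exists_dist_fst_le_of_fiber_close [Nonempty Z']
    {Φ : WithLp p (Y × Z) → WithLp p (Y' × Z')} (hdense : ∀ x', ∃ x, dist (Φ x) x' ≤ A) (z₀ : Z)
    (hfiber : ∀ y z, dist (Φ (toLp p (y, z₀))).fst (Φ (toLp p (y, z))).fst ≤ C) (y' : Y') :
    ∃ y, dist (Φ (toLp p (y, z₀))).fst y' ≤ C + A := by
  obtain ⟨w⟩ := ‹Nonempty Z'›
  obtain ⟨⟨y, z⟩, hyz⟩ := hdense (toLp p (y', w))
  exact ⟨y, (dist_triangle _ _ _).trans (add_le_add (hfiber y z) ((dist_fst_le _ _).trans hyz))⟩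

variable [PseudoMetricSpace Y] [PseudoMetricSpace Z]

theorem IsQuasiIsometricEmbedding.fst_of_fiber_coarsely_onto
    {Φ : WithLp p (Y × Z) → WithLp p (Y' × Z')}
    (hΦ : IsQuasiIsometricEmbedding L A Φ) (hL : 0 ≤ L) (z₀ : Z)
    (hfiber : ∀ y w, ∃ z,
      dist (toLp p ((Φ (toLp p (y, z₀))).fst, w)) (Φ (toLp p (y, z))) ≤ C) :
    IsQuasiIsometricEmbedding L (L * C + A) fun y ↦ (Φ (toLp p (y, z₀))).fst where
  dist_map_le x y := by
    have hC : 0 ≤ C :=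
      let ⟨_, hz⟩ := hfiber x (Φ (toLp p (x, z₀))).snd
      dist_nonneg.trans hz
    calc (1 / L) * dist (Φ (toLp p (x, z₀))).fst (Φ (toLp p (y, z₀))).fst - (L * C + A)
      _ ≤ (1 / L) * dist (Φ (toLp p (x, z₀))) (Φ (toLp p (y, z₀))) - A := by
        gcongr
        · exact dist_fst_le _ _
        · exact le_add_of_nonneg_left (mul_nonneg hL hC)
      _ ≤ dist (toLp p (x, z₀)) (toLp p (y, z₀)) := hΦ.dist_map_le _ _
      _ = dist x y := dist_toLp_prod_same_right x y z₀
  dist_le x y := by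
    set u := Φ (toLp p (x, z₀))
    set v := Φ (toLp p (y, z₀))
    obtain ⟨z, hz⟩ := hfiber y u.snd
    calc dist x y
      _ ≤ dist (toLp p (x, z₀)) (toLp p (y, z)) :=
        dist_fst_le (toLp p (x, z₀)) (toLp p (y, z))
      _ ≤ L * dist u (Φ (toLp p (y, z))) + A := hΦ.dist_le _ _
      _ ≤ L * (dist u (toLp p (v.fst, u.snd)) + C) + A := by
        gcongr
        exact (dist_triangle _ _ _).trans (add_le_add_right hz _)
      _ = L * dist u.fst v.fst + (L * C + A) := by
        rw [show dist u (toLp p (v.fst, u.snd)) = dist u.fst v.fst from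
          dist_toLp_prod_same_right u.fst v.fst u.snd]
        ring

theorem IsQuasiIsometry.fst_of_map_int_mul {a b : ℝ} {Φ : WithLp p (Y × ℝ) → WithLp p (Y' × ℝ)}
    (hΦ : IsQuasiIsometry L A Φ) (hL : 0 < L) (hA : 0 ≤ A) (ha : a ≠ 0) (hb : b ≠ 0)
    (hequiv : ∀ (y : Y) (n : ℤ), Φ (toLp p (y, n * a)) =
      toLp p ((Φ (toLp p (y, 0))).fst, (Φ (toLp p (y, 0))).snd + n * b)) :
    IsQuasiIsometry L (L * (|a| / 2 + A) + (L * (|b| / 2) + A))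
      fun y ↦ (Φ (toLp p (y, 0))).fst := by
  have onto_fiber (y : Y) (w : ℝ) : ∃ t,
      dist (toLp p ((Φ (toLp p (y, 0))).fst, w)) (Φ (toLp p (y, t))) ≤ |b| / 2 := by
    obtain ⟨n, hn⟩ := exists_int_abs_sub_mul_le hb (w - (Φ (toLp p (y, 0))).snd)
    refine ⟨n * a, ?_⟩
    rwa [hequiv, dist_toLp_prod_same_left, Real.dist_eq, ← sub_sub]
  have near_fiber (y : Y) (t : ℝ) :
      dist (Φ (toLp p (y, 0))).fst (Φ (toLp p (y, t))).fst ≤ L * (|a| / 2 + A) := by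
    obtain ⟨n, hn⟩ := exists_int_abs_sub_mul_le ha t
    calc dist (Φ (toLp p (y, 0))).fst (Φ (toLp p (y, t))).fst
      _ = dist (Φ (toLp p (y, n * a))).fst (Φ (toLp p (y, t))).fst := by rw [hequiv]; rfl
      _ ≤ dist (Φ (toLp p (y, n * a))) (Φ (toLp p (y, t))) := dist_fst_le _ _
      _ ≤ L * (dist (toLp p (y, n * a)) (toLp p (y, t)) + A) := hΦ.dist_map_le_mul hL _ _
      _ ≤ L * (|a| / 2 + A) := by
        rw [dist_toLp_prod_same_left, dist_comm, Real.dist_eq]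
        gcongr
  refine ⟨(hΦ.fst_of_fiber_coarsely_onto hL.le 0 onto_fiber).mono
    (le_add_of_nonneg_left (by positivity)), fun y' ↦ ?_⟩
  obtain ⟨y, hy⟩ := exists_dist_fst_le_of_fiber_close hΦ.exists_dist_map_le 0 near_fiber y'
  exact ⟨y, hy.trans (by gcongr; exact le_add_of_nonneg_left (by positivity))⟩

end Projection

theorem projected_quasi_isometry_general
    {Y Y' : Type*} [PseudoMetricSpace Y] [PseudoMetricSpace Y']
    (L A : ℝ) (hL : 0 < L) (hA : 0 ≤ A) (Φ : Y × ℝ → Y' × ℝ)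
    (hqie : ∀ p q : Y × ℝ,
      (1 / L) * √(dist (Φ p).1 (Φ q).1 ^ 2 + ((Φ p).2 - (Φ q).2) ^ 2) - A ≤
          √(dist p.1 q.1 ^ 2 + (p.2 - q.2) ^ 2) ∧
        √(dist p.1 q.1 ^ 2 + (p.2 - q.2) ^ 2) ≤
          L * √(dist (Φ p).1 (Φ q).1 ^ 2 + ((Φ p).2 - (Φ q).2) ^ 2) + A)
    (hdense : ∀ p' : Y' × ℝ, ∃ p : Y × ℝ,
      √(dist (Φ p).1 p'.1 ^ 2 + ((Φ p).2 - p'.2) ^ 2) ≤ A)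
    (a b : ℝ) (ha : a ≠ 0) (hb : b ≠ 0)
    (hequiv : ∀ (y : Y) (n : ℤ), Φ (y, n * a) = ((Φ (y, 0)).1, (Φ (y, 0)).2 + n * b)) :
    ∃ A' : ℝ, 0 ≤ A' ∧
      (∀ y z : Y,
        (1 / L) * dist (Φ (y, 0)).1 (Φ (z, 0)).1 - A' ≤ dist y z ∧
          dist y z ≤ L * dist (Φ (y, 0)).1 (Φ (z, 0)).1 + A') ∧
      (∀ y' : Y', ∃ y : Y, dist (Φ (y, 0)).1 y' ≤ A') := by
  simp only [← dist_toLp_two_prod] at hqie hdense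
  have hΦ : IsQuasiIsometry L A fun x : WithLp 2 (Y × ℝ) ↦ toLp 2 (Φ (ofLp x)) :=
    { dist_map_le := fun x y ↦ (hqie (ofLp x) (ofLp y)).1
      dist_le := fun x y ↦ (hqie (ofLp x) (ofLp y)).2
      exists_dist_map_le := fun x' ↦
        let ⟨x, hx⟩ := hdense (ofLp x')
        ⟨toLp 2 x, hx⟩ }
  have hproj := hΦ.fst_of_map_int_mul hL hA ha hb fun y n ↦ congrArg (toLp 2) (hequiv y n)
  exact ⟨_, by positivity, fun y z ↦ ⟨hproj.dist_map_le y z, hproj.dist_le y z⟩,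
    hproj.exists_dist_map_le⟩

/-- **Lemma 11 (first assertion, model case).** Let `Φ : Y × ℝ → Y' × ℝ` be an
`(L,A)`-quasi-isometry with respect to the `ℓ²`-product metrics which is
equivariant for vertical translations by `a` resp. `b` (`a, b > 0`). Then
`Φ̌ : Y → Y'`, `y ↦ (Φ (y, 0)).1` is an `(L, A')`-quasi-isometry for some `A'`. -/
theorem projected_quasi_isometry
    {Y Y' : Type*} [MetricSpace Y] [MetricSpace Y']
    (L A : ℝ) (hL : 1 ≤ L) (hA : 0 ≤ A)
    (Φ : Y × ℝ → Y' × ℝ)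
    -- Φ is an (L,A)-quasi-isometric embedding for the ℓ²-product metrics
    (hqie : ∀ p q : Y × ℝ,
      (1 / L) * Real.sqrt (dist (Φ p).1 (Φ q).1 ^ 2 + ((Φ p).2 - (Φ q).2) ^ 2) - A ≤
          Real.sqrt (dist p.1 q.1 ^ 2 + (p.2 - q.2) ^ 2) ∧
        Real.sqrt (dist p.1 q.1 ^ 2 + (p.2 - q.2) ^ 2) ≤
          L * Real.sqrt (dist (Φ p).1 (Φ q).1 ^ 2 + ((Φ p).2 - (Φ q).2) ^ 2) + A)
    -- the image of Φ is A-dense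
    (hdense : ∀ p' : Y' × ℝ, ∃ p : Y × ℝ,
      Real.sqrt (dist (Φ p).1 p'.1 ^ 2 + ((Φ p).2 - p'.2) ^ 2) ≤ A)
    -- equivariance with respect to vertical translations
    (a b : ℝ) (ha : 0 < a) (hb : 0 < b)
    (hequiv : ∀ (y : Y) (t : ℝ) (n : ℤ),
      Φ (y, t + n * a) = ((Φ (y, t)).1, (Φ (y, t)).2 + n * b)) :
    ∃ A' : ℝ, 0 ≤ A' ∧
      (∀ y z : Y,
        (1 / L) * dist (Φ (y, 0)).1 (Φ (z, 0)).1 - A' ≤ dist y z ∧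
          dist y z ≤ L * dist (Φ (y, 0)).1 (Φ (z, 0)).1 + A') ∧
      (∀ y' : Y', ∃ y : Y, dist (Φ (y, 0)).1 y' ≤ A') := by
  exact projected_quasi_isometry_general L A (zero_lt_one.trans_le hL) hA Φ hqie hdense
    a b ha.ne' hb.ne' fun y n ↦ by simpa only [zero_add] using hequiv y 0 n
end

section
/- Let Γ be a group acting geometrically on proper metric spaces X and X'. Let ζ_1, …, ζ_k ∈ Γ be free generators of a free abelian subgroup Λ of Γ, and assume both Min_X(Λ) = ⋂_{i≤k} Min_X(ζ_i) and Min_{X'}(Λ) = ⋂_{i≤k} Min_{X'}(ζ_i) are nonempty. Let Φ : X → X' be a Γ-equivariant (L,A)-quasi-isometry (Φ(γ•x) = γ•Φ(x) for all γ ∈ Γ, x ∈ X). Then the Hausdorff distance between Φ(Min_X(Λ)) and Min_{X'}(Λ) is finite: there is D ≥ 0 such that each set lies in the D-neighbourhood of the other. (Paper, Section 5.2: Φ(Min_X(Λ)) and Min_{X'}(Λ) have finite Hausdorff distance.) -/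
/-!
The centralizer `C` of `ζ` preserves the minimal displacement set of `ζ`, and it acts coboundedly
on every set `A` on which each `ζ i` has bounded displacement: if `γ` moves `a ∈ A` close to a
basepoint, then each `γ * ζ i * γ⁻¹` moves the basepoint a bounded amount, so by properness only
finitely many tuples of conjugates arise, and two `γ` with the same tuple differ by an element
of `C`. Both `Φ(Min_X(Λ))` and `Min_{X'}(Λ)` have bounded displacement and are preserved by `C`,
hence each lies in a bounded neighbourhood of the `C`-orbit of any point of the other.
-/

open Set

section MinDisplacement

variable {Γ X ι : Type*} [Group Γ] [PseudoMetricSpace X] [MulAction Γ X]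

variable (X) in
/-- The minimal displacement set `Min_X(ζ) = ⋂ i, Min_X(ζ i)` of a family of group elements; the
infimum is the translation length `|ζ i|_X`. -/
def minDisplacementSet (ζ : ι → Γ) : Set X :=
  ⋂ i, {x | dist (ζ i • x) x = ⨅ y : X, dist (ζ i • y) y}

theorem mem_minDisplacementSet {ζ : ι → Γ} {x : X} :
    x ∈ minDisplacementSet X ζ ↔ ∀ i, dist (ζ i • x) x = ⨅ y : X, dist (ζ i • y) y :=
  mem_iInter

theorem smul_mem_minDisplacementSet [IsIsometricSMul Γ X] {ζ : ι → Γ} {z : Γ}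
    (hz : z ∈ Subgroup.centralizer (range ζ)) {x : X} (hx : x ∈ minDisplacementSet X ζ) :
    z • x ∈ minDisplacementSet X ζ := by
  rw [mem_minDisplacementSet] at hx ⊢
  intro i
  have hcomm : ζ i * z = z * ζ i := Subgroup.mem_centralizer_iff.mp hz _ (mem_range_self i)
  rw [smul_smul, hcomm, mul_smul, dist_smul, hx i]

end MinDisplacement

section CoarseActions

variable {Γ X : Type*} [PseudoMetricSpace X] [SMul Γ X]

variable (Γ X) in
/-- A metrically proper action: only finitely many group elements move a given point by at most a
given distance. It replaces proper discontinuity on spaces whose balls need not be compact. -/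
def IsMetricallyProperAction : Prop :=
  ∀ (x : X) (r : ℝ), {γ : Γ | dist (γ • x) x ≤ r}.Finite

variable (Γ X) in
/-- A cobounded action: every point can be moved into some fixed ball. Quantifying over all centres
`x₀`, rather than asking for one, makes the action on the empty space cobounded. -/
def IsCoboundedAction : Prop :=
  ∀ x₀ : X, ∃ r : ℝ, ∀ x : X, ∃ γ : Γ, dist (γ • x) x₀ ≤ r

theorem isMetricallyProperAction_of_properlyDiscontinuous [ProperSpace X]
    (h : ∀ K : Set X, IsCompact K → {γ : Γ | ((fun x => γ • x) '' K ∩ K).Nonempty}.Finite) :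
    IsMetricallyProperAction Γ X := by
  intro x r
  refine (h _ (isCompact_closedBall x r)).subset fun γ hγ => ?_
  have hx : x ∈ Metric.closedBall x r := Metric.mem_closedBall_self (dist_nonneg.trans hγ)
  exact ⟨γ • x, mem_image_of_mem _ hx, hγ⟩

theorem isCoboundedAction_of_cocompact
    (h : ∃ K : Set X, IsCompact K ∧ ∀ x : X, ∃ γ : Γ, γ • x ∈ K) :
    IsCoboundedAction Γ X := by
  intro x₀
  obtain ⟨K, hK, hcover⟩ := h
  obtain ⟨r, hr⟩ := hK.isBounded.subset_closedBall x₀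
  exact ⟨r, fun x => (hcover x).imp fun _ hγ => hr hγ⟩

end CoarseActions

section Centralizer

theorem exists_finite_forall_inv_mul_mem_centralizer_s12 {Γ ι : Type*} [Group Γ] (ζ : ι → Γ)
    {T : Set (ι → Γ)} (hT : T.Finite) :
    ∃ S : Set Γ, S.Finite ∧ ∀ γ : Γ, (fun i => γ * ζ i * γ⁻¹) ∈ T →
      ∃ σ ∈ S, γ⁻¹ * σ ∈ Subgroup.centralizer (range ζ) := by
  let conj : Γ → ι → Γ := fun γ i => γ * ζ i * γ⁻¹
  refine ⟨Function.invFun conj '' T, hT.image _, fun γ hγ => ⟨_, mem_image_of_mem _ hγ, ?_⟩⟩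
  have hσ : conj (Function.invFun conj (conj γ)) = conj γ := Function.invFun_eq ⟨γ, rfl⟩
  change γ⁻¹ * Function.invFun conj (conj γ) ∈ _
  generalize Function.invFun conj (conj γ) = σ at hσ
  rw [Subgroup.mem_centralizer_iff, forall_mem_range]
  intro i
  have hi : σ * ζ i * σ⁻¹ = γ * ζ i * γ⁻¹ := congrFun hσ i
  calc ζ i * (γ⁻¹ * σ) = γ⁻¹ * (γ * ζ i * γ⁻¹) * σ := by group
    _ = γ⁻¹ * σ * ζ i := by rw [← hi]; group

variable {Γ X ι : Type*} [Group Γ] [PseudoMetricSpace X] [MulAction Γ X] [IsIsometricSMul Γ X]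

theorem dist_conj_smul_le (γ g : Γ) (x x₀ : X) :
    dist ((γ * g * γ⁻¹) • x₀) x₀ ≤ dist (g • x) x + 2 * dist (γ • x) x₀ := by
  have hconj : (γ * g * γ⁻¹) • γ • x = γ • g • x := by simp only [smul_smul, inv_mul_cancel_right]
  calc dist ((γ * g * γ⁻¹) • x₀) x₀
      ≤ dist ((γ * g * γ⁻¹) • x₀) ((γ * g * γ⁻¹) • γ • x)
          + dist ((γ * g * γ⁻¹) • γ • x) (γ • x) + dist (γ • x) x₀ := dist_triangle4 _ _ _ _
    _ = dist (γ • x) x₀ + dist (g • x) x + dist (γ • x) x₀ := by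
      rw [dist_smul, hconj, dist_smul, dist_comm x₀]
    _ = dist (g • x) x + 2 * dist (γ • x) x₀ := by ring

theorem exists_centralizer_smul_dist_le [Finite ι] (hproper : IsMetricallyProperAction Γ X)
    (hcob : IsCoboundedAction Γ X) (ζ : ι → Γ) (R : ι → ℝ) (x₀ : X) :
    ∃ D : ℝ, ∀ x : X, (∀ i, dist (ζ i • x) x ≤ R i) →
      ∃ z ∈ Subgroup.centralizer (range ζ), dist x (z • x₀) ≤ D := by
  obtain ⟨r, hr⟩ := hcob x₀
  have hT : {t : ι → Γ | ∀ i, dist (t i • x₀) x₀ ≤ R i + 2 * r}.Finite :=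
    Finite.pi' fun i => hproper x₀ (R i + 2 * r)
  obtain ⟨S, hS, hcoset⟩ := exists_finite_forall_inv_mul_mem_centralizer_s12 ζ hT
  obtain ⟨M, hM⟩ := (hS.image fun σ => dist x₀ (σ • x₀)).bddAbove
  refine ⟨r + M, fun x hx => ?_⟩
  obtain ⟨γ, hγ⟩ := hr x
  obtain ⟨σ, hσS, hσ⟩ := hcoset γ fun i => by
    linarith [dist_conj_smul_le γ (ζ i) x x₀, hx i]
  refine ⟨γ⁻¹ * σ, hσ, ?_⟩
  calc dist x ((γ⁻¹ * σ) • x₀) = dist (γ • x) (σ • x₀) := by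
        rw [← dist_smul γ, smul_smul, mul_inv_cancel_left]
    _ ≤ dist (γ • x) x₀ + dist x₀ (σ • x₀) := dist_triangle _ _ _
    _ ≤ r + M := add_le_add hγ (hM (mem_image_of_mem _ hσS))

theorem exists_forall_exists_dist_le_of_centralizer_smul_mem [Finite ι]
    (hproper : IsMetricallyProperAction Γ X) (hcob : IsCoboundedAction Γ X) {ζ : ι → Γ}
    {A B : Set X} (hA : ∀ i, ∃ R : ℝ, ∀ a ∈ A, dist (ζ i • a) a ≤ R) (hne : B.Nonempty)
    (hB : ∀ z ∈ Subgroup.centralizer (range ζ), ∀ b ∈ B, z • b ∈ B) :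
    ∃ D : ℝ, ∀ a ∈ A, ∃ b ∈ B, dist a b ≤ D := by
  obtain ⟨b₀, hb₀⟩ := hne
  choose R hR using hA
  obtain ⟨D, hD⟩ := exists_centralizer_smul_dist_le hproper hcob ζ R b₀
  refine ⟨D, fun a ha => ?_⟩
  obtain ⟨z, hz, hdist⟩ := hD a fun i => hR i a ha
  exact ⟨z • b₀, hB z hz b₀ hb₀, hdist⟩

end Centralizer

theorem exists_forall_dist_map_le_of_coarse_lipschitz {X X' : Type*} [PseudoMetricSpace X]
    [PseudoMetricSpace X'] {Φ : X → X'} {L A : ℝ} (hL : 0 < L)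
    (hΦ : ∀ x y, (1 / L) * dist (Φ x) (Φ y) - A ≤ dist x y) (r : ℝ) :
    ∃ s : ℝ, ∀ x y, dist x y ≤ r → dist (Φ x) (Φ y) ≤ s := by
  refine ⟨L * (r + A), fun x y hxy => ?_⟩
  rw [← div_le_iff₀' hL, div_eq_inv_mul, ← one_div]
  linarith [hΦ x y]

theorem image_of_min_set_finite_hausdorff_distance_general
    {Γ X X' ι : Type*} [Group Γ] [PseudoMetricSpace X] [PseudoMetricSpace X']
    [MulAction Γ X] [MulAction Γ X'] [IsIsometricSMul Γ X] [IsIsometricSMul Γ X'] [Finite ι]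
    (hproper : IsMetricallyProperAction Γ X') (hcob : IsCoboundedAction Γ X') {ζ : ι → Γ}
    (hne : (minDisplacementSet X ζ).Nonempty) (hne' : (minDisplacementSet X' ζ).Nonempty)
    {Φ : X → X'} (hΦ : ∀ r : ℝ, ∃ s : ℝ, ∀ x y, dist x y ≤ r → dist (Φ x) (Φ y) ≤ s)
    (hequiv : ∀ (γ : Γ) (x : X), Φ (γ • x) = γ • Φ x) :
    ∃ D : ℝ, 0 ≤ D ∧
      (∀ x ∈ minDisplacementSet X ζ, ∃ y ∈ minDisplacementSet X' ζ, dist (Φ x) y ≤ D) ∧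
      (∀ y ∈ minDisplacementSet X' ζ, ∃ x ∈ minDisplacementSet X ζ, dist (Φ x) y ≤ D) := by
  have hbdd_image : ∀ i, ∃ R : ℝ, ∀ a ∈ Φ '' minDisplacementSet X ζ, dist (ζ i • a) a ≤ R := by
    intro i
    obtain ⟨s, hs⟩ := hΦ (⨅ y : X, dist (ζ i • y) y)
    refine ⟨s, forall_mem_image.mpr fun x hx => ?_⟩
    rw [← hequiv]
    exact hs _ _ (mem_minDisplacementSet.mp hx i).le
  have hsmul_image : ∀ z ∈ Subgroup.centralizer (range ζ),
      ∀ b ∈ Φ '' minDisplacementSet X ζ, z • b ∈ Φ '' minDisplacementSet X ζ :=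
    fun z hz => forall_mem_image.mpr fun x hx =>
      ⟨z • x, smul_mem_minDisplacementSet hz hx, hequiv z x⟩
  obtain ⟨D₁, hD₁⟩ := exists_forall_exists_dist_le_of_centralizer_smul_mem hproper hcob
    hbdd_image hne' fun _ hz _ => smul_mem_minDisplacementSet hz
  obtain ⟨D₂, hD₂⟩ := exists_forall_exists_dist_le_of_centralizer_smul_mem hproper hcob
    (fun i => ⟨_, fun _ hy => (mem_minDisplacementSet.mp hy i).le⟩) (hne.image Φ) hsmul_image
  refine ⟨max 0 (max D₁ D₂), le_max_left _ _, fun x hx => ?_, fun y hy => ?_⟩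
  · obtain ⟨y, hy, hxy⟩ := hD₁ _ (mem_image_of_mem Φ hx)
    exact ⟨y, hy, hxy.trans (le_max_of_le_right (le_max_left _ _))⟩
  · obtain ⟨_, ⟨x, hx, rfl⟩, hyx⟩ := hD₂ y hy
    exact ⟨x, hx, dist_comm y (Φ x) ▸ hyx.trans (le_max_of_le_right (le_max_right _ _))⟩

/-- Section 5.2: if `Γ` acts geometrically on proper metric spaces `X` and `X'`,
`ζ 1, …, ζ k` are free generators of a free abelian subgroup `Λ` of `Γ` with both
minimal displacement sets nonempty, and `Φ : X → X'` is a `Γ`-equivariant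
`(L,A)`-quasi-isometry, then `Φ(Min_X(Λ))` and `Min_{X'}(Λ)` have finite
Hausdorff distance. -/
theorem image_of_min_set_finite_hausdorff_distance
    {X X' : Type*} [MetricSpace X] [ProperSpace X] [MetricSpace X'] [ProperSpace X']
    {Γ : Type*} [Group Γ] [MulAction Γ X] [MulAction Γ X']
    -- Γ acts by isometries on X and X'
    (isom : ∀ (γ : Γ) (x y : X), dist (γ • x) (γ • y) = dist x y)
    (isom' : ∀ (γ : Γ) (x y : X'), dist (γ • x) (γ • y) = dist x y)
    -- Γ acts properly discontinuously on X and X'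
    (propdisc : ∀ K : Set X, IsCompact K →
      {γ : Γ | ((fun x => γ • x) '' K ∩ K).Nonempty}.Finite)
    (propdisc' : ∀ K : Set X', IsCompact K →
      {γ : Γ | ((fun x => γ • x) '' K ∩ K).Nonempty}.Finite)
    -- Γ acts cocompactly on X and X'
    (cocpt : ∃ K : Set X, IsCompact K ∧ ∀ x : X, ∃ γ : Γ, γ • x ∈ K)
    (cocpt' : ∃ K : Set X', IsCompact K ∧ ∀ x : X', ∃ γ : Γ, γ • x ∈ K)
    -- ζ 1, …, ζ k are free generators of a free abelian subgroup of Γ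
    {k : ℕ} (ζ : Fin k → Γ)
    (φ : Multiplicative (Fin k → ℤ) →* Γ)
    (hφinj : Function.Injective φ)
    (hφζ : ∀ i : Fin k, φ (Multiplicative.ofAdd (Pi.single i 1)) = ζ i)
    -- the minimal displacement sets, both nonempty
    (MinX : Set X) (MinX' : Set X')
    (hMinX : MinX = ⋂ i : Fin k,
      {x : X | dist (ζ i • x) x = ⨅ y : X, dist (ζ i • y) y})
    (hMinX' : MinX' = ⋂ i : Fin k,
      {x : X' | dist (ζ i • x) x = ⨅ y : X', dist (ζ i • y) y})
    (hne : MinX.Nonempty) (hne' : MinX'.Nonempty)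
    -- Φ is a Γ-equivariant (L,A)-quasi-isometry
    (L A : ℝ) (hL : 1 ≤ L) (hA : 0 ≤ A)
    (Φ : X → X')
    (hqie : ∀ x y : X,
      (1 / L) * dist (Φ x) (Φ y) - A ≤ dist x y ∧
        dist x y ≤ L * dist (Φ x) (Φ y) + A)
    (hdense : ∀ x' : X', ∃ x : X, dist (Φ x) x' ≤ A)
    (hequiv : ∀ (γ : Γ) (x : X), Φ (γ • x) = γ • Φ x) :
    ∃ D : ℝ, 0 ≤ D ∧
      (∀ x ∈ MinX, ∃ y ∈ MinX', dist (Φ x) y ≤ D) ∧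
      (∀ y ∈ MinX', ∃ x ∈ MinX, dist (Φ x) y ≤ D) := by
  have : IsIsometricSMul Γ X := ⟨fun γ => .of_dist_eq (isom γ)⟩
  have : IsIsometricSMul Γ X' := ⟨fun γ => .of_dist_eq (isom' γ)⟩
  subst hMinX hMinX'
  exact image_of_min_set_finite_hausdorff_distance_general
    (isMetricallyProperAction_of_properlyDiscontinuous propdisc')
    (isCoboundedAction_of_cocompact cocpt') hne hne'
    (exists_forall_dist_map_le_of_coarse_lipschitz (by linarith) fun x y => (hqie x y).1) hequiv
end
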